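/- Covariance structure for the noised walk on a semidirect product. Assume Δ is a subgroup of Γ (so Γ = Λ ⋊ Δ). Let ⟨·,·⟩ be an Ad-invariant inner product on ℝ^m and θ̲ := (1/#F)·∑_{f∈F} Ad(f). Let μ be a non-degenerate aperiodic probability measure on Γ with finite second moment, and for ρ ∈ (0,1] let π^ρ be the probability measure on Γ×Γ with π^ρ(γ,γ') = ρ·μ(γ)·μ(γ') + (1−ρ)·μ(γ)·[γ = γ']. Define the bilinear form B_{π^ρ} on ℝ^m×ℝ^m using the product diagram of (Γ×Γ, π^ρ, Δ×Δ) and B_μ on ℝ^m using (Γ, μ, Δ), by B(𝐯,𝐯') := ∑_{(x,s)} c(x,s)·u(x,s)·u'(x,s) − χ(u)·χ(u') where u, u' are the harmonic parts of the 1-forms 𝐯̂(x,s) := ⟨𝐯, α(x,s)⟩, 𝐯̂' (inner products taken as ⟨·,·⟩ and its orthogonal sum on ℝ^m×ℝ^m). Then for all v₁, v₁', v₂ ∈ ℝ^m: B_{π^ρ}((v₁,0),(v₁',0)) = B_μ(v₁,v₁') = B_{π^ρ}((0,v₁),(0,v₁')), and B_{π^ρ}((v₁,0),(0,v₂)) =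 (1−ρ)·B_μ(θ̲v₁, θ̲v₂). -/

import Mathlib

open scoped BigOperators Classical
open Filter Matrix MeasureTheory

namespace NSVA

noncomputable section

/-- Convolution of two real-valued functions on a group. -/
def conv {G : Type*} [Group G] (μ ν : G → ℝ) : G → ℝ :=
  fun g => ∑' h : G, μ h * ν (h⁻¹ * g)

/-- Convolution powers: `convPow μ 0 = δ_1`, `convPow μ (n+1) = (convPow μ n) * μ`. -/
def convPow {G : Type*} [Group G] (μ : G → ℝ) : ℕ → G → ℝ
  | 0 => fun g => if g = 1 then 1 else 0
  | n + 1 => conv (convPow μ n) μ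

/-- A probability measure on a countable set, viewed as a function. -/
def IsProb {G : Type*} (μ : G → ℝ) : Prop := (∀ g, 0 ≤ μ g) ∧ HasSum μ 1

/-- The support of `μ` generates the group as a semigroup. -/
def Nondeg {G : Type*} [Group G] (μ : G → ℝ) : Prop :=
  ∀ g : G, g ∈ Subsemigroup.closure {x : G | 0 < μ x}

/-- `μ` is aperiodic: `μ_n(1) > 0` for all large enough `n`. -/
def Aperiodic {G : Type*} [Group G] (μ : G → ℝ) : Prop :=
  ∃ N : ℕ, ∀ n : ℕ, N ≤ n → 0 < convPow μ n 1

/-- Total variation distance between two (probability) functions. -/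
def tv {Z : Type*} (p q : Z → ℝ) : ℝ := (1 / 2) * ∑' z : Z, |p z - q z|

/-- Word length with respect to a finite set `S₀`. -/
def wordLength {G : Type*} [Group G] (S₀ : Finset G) (g : G) : ℕ :=
  sInf {n : ℕ | ∃ l : List G, (∀ s ∈ l, s ∈ S₀) ∧ l.length = n ∧ l.prod = g}

/-- Finite second moment with respect to a word metric given by a finite symmetric
generating set. -/
def FinSecondMoment {G : Type*} [Group G] (μ : G → ℝ) : Prop :=
  ∃ S₀ : Finset G, (∀ s ∈ S₀, s⁻¹ ∈ S₀) ∧ Subgroup.closure (S₀ : Set G) = ⊤ ∧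
    Summable (fun g : G => (wordLength S₀ g : ℝ) ^ 2 * μ g)

/-- A group is virtually abelian if it has an abelian subgroup of finite index. -/
def VirtAbelian (G : Type*) [Group G] : Prop :=
  ∃ A : Subgroup G, A.index ≠ 0 ∧ ∀ a b : A, a * b = b * a

/-- The noised measure `π^ρ` on `G × G`. -/
def noised {G : Type*} (μ : G → ℝ) (ρ : ℝ) : G × G → ℝ :=
  fun p => ρ * μ p.1 * μ p.2 + (1 - ρ) * μ p.1 * (if p.1 = p.2 then 1 else 0)

/-- First marginal of a measure on a product. -/
def marg1 {G₁ G₂ : Type*} (ν : G₁ × G₂ → ℝ) : G₁ → ℝ := fun γ₁ => ∑' γ₂ : G₂, ν (γ₁, γ₂)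

/-- Second marginal of a measure on a product. -/
def marg2 {G₁ G₂ : Type*} (ν : G₁ × G₂ → ℝ) : G₂ → ℝ := fun γ₂ => ∑' γ₁ : G₁, ν (γ₁, γ₂)

/-- A system of representatives of the right cosets `Λ\Γ` containing the identity,
together with the representative map `rep`, constant on right cosets. -/
structure RepSystem {Γ : Type*} [Group Γ] (Λ : Subgroup Γ) where
  Δ : Finset Γ
  one_mem : (1 : Γ) ∈ Δ
  rep : Γ → Γ
  rep_mem : ∀ γ : Γ, rep γ ∈ Δ
  rep_spec : ∀ γ : Γ, γ * (rep γ)⁻¹ ∈ Λ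
  rep_idem : ∀ x ∈ Δ, rep x = x
  rep_coset : ∀ γ : Γ, ∀ v ∈ Λ, rep (v * γ) = rep γ

variable {Γ : Type*} [Group Γ] {Λ : Subgroup Γ} {m : ℕ}

/-- The cocycle `α(x,s) = ψ(x·s·(x^s)⁻¹) ∈ ℤ^m`. -/
def cocycle (ψ : Λ ≃* Multiplicative (Fin m → ℤ)) (R : RepSystem Λ) (x s : Γ) : Fin m → ℤ :=
  Multiplicative.toAdd (ψ ⟨x * s * (R.rep (x * s))⁻¹, R.rep_spec (x * s)⟩)

/-- The transfer homomorphism `θ(γ) = ∑_{x∈Δ} α(x,γ)`. -/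
def transfer (ψ : Λ ≃* Multiplicative (Fin m → ℤ)) (R : RepSystem Λ) (γ : Γ) : Fin m → ℤ :=
  ∑ x ∈ R.Δ, cocycle ψ R x γ

/-- `Φ(γ) = ψ(v)` where `γ = v·x`, `v ∈ Λ`, `x ∈ Δ`. -/
def Phi (ψ : Λ ≃* Multiplicative (Fin m → ℤ)) (R : RepSystem Λ) (γ : Γ) : Fin m → ℤ :=
  Multiplicative.toAdd (ψ ⟨γ * (R.rep γ)⁻¹, R.rep_spec γ⟩)

/-- A 1-form on the quotient diagram. -/
def IsOneForm (R : RepSystem Λ) (ω : Γ → Γ → ℝ) : Prop :=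
  ∀ x ∈ R.Δ, ∀ s : Γ, ω (R.rep (x * s)) s⁻¹ = -ω x s

/-- `χ(ω) = ∑_{x∈Δ} ∑_s c(x,s)·ω(x,s)` where `c(x,s) = μ(s)/#F`. -/
def chi (R : RepSystem Λ) (μ : Γ → ℝ) (ω : Γ → Γ → ℝ) : ℝ :=
  ∑ x ∈ R.Δ, ∑' s : Γ, μ s / (Λ.index : ℝ) * ω x s

/-- Square-integrability of a 1-form. -/
def SqInt (R : RepSystem Λ) (μ : Γ → ℝ) (ω : Γ → Γ → ℝ) : Prop :=
  ∀ x ∈ R.Δ, Summable (fun s : Γ => μ s / (Λ.index : ℝ) * ω x s ^ 2)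

/-- Harmonicity of a (square-integrable) 1-form. -/
def Harmonic (R : RepSystem Λ) (μ : Γ → ℝ) (ω : Γ → Γ → ℝ) : Prop :=
  SqInt R μ ω ∧ ∀ x ∈ R.Δ, (∑' s : Γ, μ s * ω x s) = chi R μ ω

/-- The differential `df(x,s) = f(x^s) − f(x)`. -/
def dd (R : RepSystem Λ) (f : Γ → ℝ) : Γ → Γ → ℝ := fun x s => f (R.rep (x * s)) - f x

/-- `(u, f)` is a harmonic decomposition of the 1-form `ω`: `ω = u + df` with `u`
a harmonic 1-form. -/
def IsHarmDecomp (R : RepSystem Λ) (μ : Γ → ℝ) (ω u : Γ → Γ → ℝ) (f : Γ → ℝ) : Prop :=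
  IsOneForm R u ∧ Harmonic R μ u ∧ ∀ x ∈ R.Δ, ∀ s : Γ, ω x s = u x s + dd R f x s

/-- The 1-form `v̂(x,s) = ⟨v, α(x,s)⟩` (standard inner product). -/
def vhat (ψ : Λ ≃* Multiplicative (Fin m → ℤ)) (R : RepSystem Λ) (v : Fin m → ℝ) :
    Γ → Γ → ℝ :=
  fun x s => ∑ i, v i * (cocycle ψ R x s i : ℝ)

/-- The 1-form `v̂(x,s) = B(v, α(x,s))` for a bilinear form `B`. -/
def vhatB (ψ : Λ ≃* Multiplicative (Fin m → ℤ)) (R : RepSystem Λ)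
    (B : (Fin m → ℝ) →ₗ[ℝ] (Fin m → ℝ) →ₗ[ℝ] ℝ) (v : Fin m → ℝ) : Γ → Γ → ℝ :=
  fun x s => B v (fun i => (cocycle ψ R x s i : ℝ))

/-- The drift `ζ = (1/#F)·∑_{x∈Δ}∑_s μ(s)·α(x,s) ∈ ℝ^m`. -/
def drift (ψ : Λ ≃* Multiplicative (Fin m → ℤ)) (R : RepSystem Λ) (μ : Γ → ℝ) : Fin m → ℝ :=
  fun i => (Λ.index : ℝ)⁻¹ * ∑ x ∈ R.Δ, ∑' s : Γ, μ s * (cocycle ψ R x s i : ℝ)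

/-- The covariance pairing `∑_{x,s} c(x,s)·u(x,s)·u'(x,s) − χ(u)·χ(u')`. -/
def cov (R : RepSystem Λ) (μ : Γ → ℝ) (u u' : Γ → Γ → ℝ) : ℝ :=
  (∑ x ∈ R.Δ, ∑' s : Γ, μ s / (Λ.index : ℝ) * (u x s * u' x s)) - chi R μ u * chi R μ u'

/-- The transfer operator `ℒ_v` acting on functions `Δ → ℂ`. -/
def transferOp (ψ : Λ ≃* Multiplicative (Fin m → ℤ)) (R : RepSystem Λ) (μ : Γ → ℝ)
    (v : Fin m → ℝ) (f : Γ → ℂ) : Γ → ℂ :=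
  fun x => ∑' s : Γ, (μ s : ℂ) *
    Complex.exp (2 * Real.pi * Complex.I * ((∑ i, v i * (cocycle ψ R x s i : ℝ)) : ℝ)) *
    f (R.rep (x * s))

/-- The Gaussian density `ξ_A(w)` associated with a (positive-definite) matrix `A`. -/
def gauss {d : ℕ} (A : Matrix (Fin d) (Fin d) ℝ) (w : Fin d → ℝ) : ℝ :=
  (2 * Real.pi) ^ (-(d : ℝ) / 2) * A.det ^ (-(1 : ℝ) / 2) *
    Real.exp (-(w ⬝ᵥ A⁻¹.mulVec w) / 2)

/-- The product representative system for `Λ₁ × Λ₂ ≤ Γ₁ × Γ₂`. -/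
def prodRep {Γ₁ : Type*} [Group Γ₁] {Γ₂ : Type*} [Group Γ₂]
    {Λ₁ : Subgroup Γ₁} {Λ₂ : Subgroup Γ₂}
    (R₁ : RepSystem Λ₁) (R₂ : RepSystem Λ₂) : RepSystem (Λ₁.prod Λ₂) where
  Δ := R₁.Δ ×ˢ R₂.Δ
  one_mem := Finset.mem_product.mpr ⟨R₁.one_mem, R₂.one_mem⟩
  rep := fun p => (R₁.rep p.1, R₂.rep p.2)
  rep_mem := fun p => Finset.mem_product.mpr ⟨R₁.rep_mem p.1, R₂.rep_mem p.2⟩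
  rep_spec := fun p => Subgroup.mem_prod.mpr ⟨R₁.rep_spec p.1, R₂.rep_spec p.2⟩
  rep_idem := fun x hx => by
    rcases Finset.mem_product.mp hx with ⟨h1, h2⟩
    exact Prod.ext_iff.mpr ⟨R₁.rep_idem x.1 h1, R₂.rep_idem x.2 h2⟩
  rep_coset := fun p v hv => by
    rcases Subgroup.mem_prod.mp hv with ⟨h1, h2⟩
    exact Prod.ext_iff.mpr ⟨R₁.rep_coset p.1 v.1 h1, R₂.rep_coset p.2 v.2 h2⟩

/-- The 1-form `𝐯̂(x,s) = ⟨𝐯, α(x,s)⟩` on a product, standard inner product. -/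
def vhat2 {Γ₁ : Type*} [Group Γ₁] {Γ₂ : Type*} [Group Γ₂]
    {Λ₁ : Subgroup Γ₁} {Λ₂ : Subgroup Γ₂} {m₁ m₂ : ℕ}
    (ψ₁ : Λ₁ ≃* Multiplicative (Fin m₁ → ℤ)) (R₁ : RepSystem Λ₁)
    (ψ₂ : Λ₂ ≃* Multiplicative (Fin m₂ → ℤ)) (R₂ : RepSystem Λ₂)
    (v : (Fin m₁ → ℝ) × (Fin m₂ → ℝ)) : (Γ₁ × Γ₂) → (Γ₁ × Γ₂) → ℝ :=
  fun x s => (∑ i, v.1 i * (cocycle ψ₁ R₁ x.1 s.1 i : ℝ)) +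
    ∑ i, v.2 i * (cocycle ψ₂ R₂ x.2 s.2 i : ℝ)

/-- The 1-form `𝐯̂(x,s) = ⟨𝐯, α(x,s)⟩` on a product, orthogonal-sum of the two
bilinear forms `B₁`, `B₂`. -/
def vhatB2 {Γ₁ : Type*} [Group Γ₁] {Γ₂ : Type*} [Group Γ₂]
    {Λ₁ : Subgroup Γ₁} {Λ₂ : Subgroup Γ₂} {m₁ m₂ : ℕ}
    (ψ₁ : Λ₁ ≃* Multiplicative (Fin m₁ → ℤ)) (R₁ : RepSystem Λ₁)
    (B₁ : (Fin m₁ → ℝ) →ₗ[ℝ] (Fin m₁ → ℝ) →ₗ[ℝ] ℝ)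
    (ψ₂ : Λ₂ ≃* Multiplicative (Fin m₂ → ℤ)) (R₂ : RepSystem Λ₂)
    (B₂ : (Fin m₂ → ℝ) →ₗ[ℝ] (Fin m₂ → ℝ) →ₗ[ℝ] ℝ)
    (v : (Fin m₁ → ℝ) × (Fin m₂ → ℝ)) : (Γ₁ × Γ₂) → (Γ₁ × Γ₂) → ℝ :=
  fun x s => B₁ v.1 (fun i => (cocycle ψ₁ R₁ x.1 s.1 i : ℝ)) +
    B₂ v.2 (fun i => (cocycle ψ₂ R₂ x.2 s.2 i : ℝ))

end

/-!
Two harmonic parts of the same 1-form differ by a harmonic differential, whose energy is zero, so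
they agree on the support of the weights. On the product diagram, the harmonic part of a form pulled
back from one factor is the pull-back of its harmonic part there; this gives the diagonal blocks.
For forms pulled back from different factors, the covariance only sees the averages over the
vertices, and averaging kills differentials. When `Δ` is a subgroup, `α(x, s) = Ad(x) α(1, s)`, so
the average of `v̂` is `s ↦ ⟨θ̲v, α(1, s)⟩`. As `θ̲v` is fixed by `Ad`, the form attached to it does
not depend on the vertex and is its own harmonic part. Finally, if the two steps `s`, `s'` are
distributed according to `π^ρ`, then `a(s)` and `b(s')` have covariance `(1 - ρ) Cov_μ(a, b)`.
-/

section WeightedSums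

variable {ι : Type*} {μ : ι → ℝ}

lemma tsum_expect {κ : Type*} {s : Finset κ} {f : κ → ι → ℝ} (hf : ∀ x ∈ s, Summable (f x)) :
    ∑' i, 𝔼 x ∈ s, f x i = 𝔼 x ∈ s, ∑' i, f x i := by
  simp only [Finset.expect_eq_sum_div_card, tsum_div_const, Summable.tsum_finsetSum hf]

/-- Square-summability of `h` with respect to the weights `μ`, i.e. `h ∈ L²(μ)`. -/
def SqSummable (μ h : ι → ℝ) : Prop := Summable fun i => μ i * h i ^ 2

/-- The covariance of the random variables `h` and `k` under the weights `μ`. -/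
noncomputable def weightedCov (μ h k : ι → ℝ) : ℝ :=
  ∑' i, μ i * (h i * k i) - (∑' i, μ i * h i) * ∑' i, μ i * k i

namespace SqSummable

variable {h k : ι → ℝ}

lemma summable_mul (hμ₀ : 0 ≤ μ) (hh : SqSummable μ h) (hk : SqSummable μ k) :
    Summable fun i => μ i * (h i * k i) := by
  refine Summable.of_norm_bounded (Summable.add hh hk) fun i => ?_
  have amgm : |h i * k i| ≤ h i ^ 2 + k i ^ 2 := by
    rw [abs_le]
    constructor <;> nlinarith [sq_nonneg (h i + k i), sq_nonneg (h i - k i)]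
  rw [Real.norm_eq_abs, abs_mul, abs_of_nonneg (hμ₀ i), ← mul_add]
  exact mul_le_mul_of_nonneg_left amgm (hμ₀ i)

lemma const (hμ : Summable μ) (c : ℝ) : SqSummable μ fun _ => c := hμ.mul_right (c ^ 2)

lemma summable (hμ₀ : 0 ≤ μ) (hμ : Summable μ) (hh : SqSummable μ h) :
    Summable fun i => μ i * h i := by
  simpa only [mul_one] using hh.summable_mul hμ₀ (const hμ 1)

lemma add (hμ₀ : 0 ≤ μ) (hh : SqSummable μ h) (hk : SqSummable μ k) :
    SqSummable μ fun i => h i + k i :=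
  ((Summable.add hh hk).add ((hh.summable_mul hμ₀ hk).mul_left 2)).congr fun i => by ring

lemma const_mul (c : ℝ) (hh : SqSummable μ h) : SqSummable μ fun i => c * h i :=
  (hh.mul_left (c ^ 2)).congr fun i => by ring

lemma sub (hμ₀ : 0 ≤ μ) (hh : SqSummable μ h) (hk : SqSummable μ k) :
    SqSummable μ fun i => h i - k i := by
  simpa only [neg_one_mul, ← sub_eq_add_neg] using hh.add hμ₀ (hk.const_mul (-1))

lemma comp_of_mem {κ : Type*} {s : Finset κ} (hμ₀ : 0 ≤ μ) (hμ : Summable μ) {r : ι → κ}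
    (hr : ∀ i, r i ∈ s) (f : κ → ℝ) : SqSummable μ fun i => f (r i) :=
  Summable.of_nonneg_of_le (fun i => mul_nonneg (hμ₀ i) (sq_nonneg _))
    (fun i => mul_le_mul_of_nonneg_left
      (Finset.single_le_sum (f := fun y => f y ^ 2) (fun _ _ => sq_nonneg _) (hr i)) (hμ₀ i))
    (hμ.mul_right (∑ y ∈ s, f y ^ 2))

end SqSummable

end WeightedSums

section Marginals

variable {α β : Type*} {ν : α × β → ℝ} (hν₀ : 0 ≤ ν) (hν : Summable ν)

include hν₀ in
lemma marg1_nonneg : 0 ≤ marg1 ν := fun a => tsum_nonneg fun b => hν₀ (a, b)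

include hν₀ hν in
lemma summable_mul_fst_iff {h : α → ℝ} :
    (Summable fun p => ν p * h p.1) ↔ Summable fun a => marg1 ν a * h a := by
  have hnonneg : (0 : α × β → ℝ) ≤ fun p => |ν p * h p.1| := fun p => abs_nonneg _
  have hfiber : ∀ a, Summable fun b => |ν (a, b) * h a| := fun a =>
    (hν.prod_factor a |>.mul_right (h a)).abs
  rw [← summable_abs_iff, summable_prod_of_nonneg hnonneg, and_iff_right hfiber,
    ← summable_abs_iff (f := fun a => marg1 ν a * h a)]
  refine summable_congr fun a => ?_
  simp only [abs_mul, abs_of_nonneg (hν₀ _), tsum_mul_right, abs_of_nonneg (marg1_nonneg hν₀ a)]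
  rfl

include hν₀ hν in
lemma tsum_mul_fst (h : α → ℝ) : ∑' p, ν p * h p.1 = ∑' a, marg1 ν a * h a := by
  by_cases hs : Summable fun p => ν p * h p.1
  · rw [hs.tsum_prod]
    exact tsum_congr fun a => tsum_mul_right (f := fun b => ν (a, b)) (a := h a)
  · rw [tsum_eq_zero_of_not_summable hs,
      tsum_eq_zero_of_not_summable ((summable_mul_fst_iff hν₀ hν).not.mp hs)]

include hν₀ hν in
lemma SqSummable.comp_fst_iff {h : α → ℝ} :
    SqSummable ν (h ∘ Prod.fst) ↔ SqSummable (marg1 ν) h :=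
  summable_mul_fst_iff hν₀ hν (h := fun a => h a ^ 2)

end Marginals

namespace RepSystem

variable {G : Type*} [Group G] {L : Subgroup G} (R : RepSystem L)

lemma nonempty : R.Δ.Nonempty := ⟨1, R.one_mem⟩

lemma rep_rep_mul_inv {x : G} (hx : x ∈ R.Δ) (s : G) : R.rep (R.rep (x * s) * s⁻¹) = x :=
  calc R.rep (R.rep (x * s) * s⁻¹) = R.rep ((x * s * (R.rep (x * s))⁻¹)⁻¹ * x) := by
        congr 1; group
    _ = x := by rw [R.rep_coset x _ (L.inv_mem (R.rep_spec (x * s))), R.rep_idem x hx]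

lemma expect_rep (f : G → ℝ) (s : G) : 𝔼 x ∈ R.Δ, f (R.rep (x * s)) = 𝔼 x ∈ R.Δ, f x := by
  refine Finset.expect_nbij' (fun x => R.rep (x * s)) (fun x => R.rep (x * s⁻¹))
    (fun _ _ => R.rep_mem _) (fun _ _ => R.rep_mem _)
    (fun x hx => R.rep_rep_mul_inv hx s) (fun x hx => ?_) (fun _ _ => rfl)
  simpa only [inv_inv] using R.rep_rep_mul_inv hx s⁻¹

-- Inversion turns right cosets into left cosets.
lemma bijective_mk_inv : Function.Bijective fun x : R.Δ => ((x⁻¹ : G) : G ⧸ L) := by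
  refine ⟨fun x y hxy => Subtype.ext ?_, fun q => ?_⟩
  · have hL : (x : G) * (y : G)⁻¹ ∈ L := by simpa only [inv_inv] using QuotientGroup.eq.mp hxy
    calc (x : G) = R.rep (x * (y : G)⁻¹ * y) := by rw [inv_mul_cancel_right, R.rep_idem x x.2]
      _ = y := by rw [R.rep_coset y _ hL, R.rep_idem y y.2]
  · obtain ⟨γ, rfl⟩ := QuotientGroup.mk_surjective q
    refine ⟨⟨R.rep γ⁻¹, R.rep_mem _⟩, QuotientGroup.eq.mpr ?_⟩
    simpa using L.inv_mem (R.rep_spec γ⁻¹)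

lemma card_eq_index : R.Δ.card = L.index :=
  (Nat.card_eq_finsetCard R.Δ).symm.trans
    (Nat.card_congr (Equiv.ofBijective _ R.bijective_mk_inv))

lemma expect_eq_sum_quotient [Fintype (G ⧸ L)] (F : G ⧸ L → ℝ) :
    𝔼 x ∈ R.Δ, F ((x⁻¹ : G) : G ⧸ L) = (L.index : ℝ)⁻¹ * ∑ q, F q := by
  rw [Finset.expect_eq_sum_div_card, R.card_eq_index, div_eq_inv_mul, ← Finset.sum_coe_sort,
    ← R.bijective_mk_inv.sum_comp F]

end RepSystem

section Diagram

variable {G : Type*} [Group G] {L : Subgroup G} {R : RepSystem L} {μ : G → ℝ}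

lemma RepSystem.index_ne_zero (R : RepSystem L) : L.index ≠ 0 :=
  R.card_eq_index ▸ R.nonempty.card_ne_zero

lemma chi_eq_expect (R : RepSystem L) (μ : G → ℝ) (ω : G → G → ℝ) :
    chi R μ ω = 𝔼 x ∈ R.Δ, ∑' s, μ s * ω x s := by
  simp only [chi, div_mul_eq_mul_div, tsum_div_const, Finset.expect_eq_sum_div_card,
    Finset.sum_div, R.card_eq_index]

lemma cov_eq (R : RepSystem L) (μ : G → ℝ) (u u' : G → G → ℝ) :
    cov R μ u u' = chi R μ (fun x s => u x s * u' x s) - chi R μ u * chi R μ u' := rfl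

lemma sqInt_iff {ω : G → G → ℝ} : SqInt R μ ω ↔ ∀ x ∈ R.Δ, SqSummable μ (ω x) := by
  refine forall₂_congr fun x _ => ?_
  have hI : (L.index : ℝ)⁻¹ ≠ 0 := inv_ne_zero (Nat.cast_ne_zero.mpr R.index_ne_zero)
  rw [SqSummable, ← summable_mul_right_iff (f := fun s => μ s * ω x s ^ 2) hI]
  exact summable_congr fun s => by ring

/-- Equality of two 1-forms at every arrow `(x, s)` of positive weight; everything else
is invisible to `chi` and `cov`. -/
def EqOnSupport (R : RepSystem L) (μ : G → ℝ) (u w : G → G → ℝ) : Prop :=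
  ∀ x ∈ R.Δ, ∀ s, μ s ≠ 0 → u x s = w x s

lemma chi_congr {u w : G → G → ℝ} (h : EqOnSupport R μ u w) : chi R μ u = chi R μ w := by
  refine Finset.sum_congr rfl fun x hx => tsum_congr fun s => ?_
  by_cases hs : μ s = 0
  · simp only [hs, zero_div, zero_mul]
  · rw [h x hx s hs]

lemma cov_congr {u u' w w' : G → G → ℝ} (h : EqOnSupport R μ u w) (h' : EqOnSupport R μ u' w') :
    cov R μ u u' = cov R μ w w' := by
  rw [cov_eq, cov_eq, chi_congr h, chi_congr h',
    chi_congr fun x hx s hs => congrArg₂ (· * ·) (h x hx s hs) (h' x hx s hs)]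

/-- The mean over the vertices `x` of a 1-form `ω`, as a function of the step `s`. -/
noncomputable def average (R : RepSystem L) (ω : G → G → ℝ) (s : G) : ℝ := 𝔼 x ∈ R.Δ, ω x s

lemma average_dd (R : RepSystem L) (f : G → ℝ) (s : G) : average R (dd R f) s = 0 := by
  simp only [average, dd, Finset.expect_sub_distrib, R.expect_rep, sub_self]

lemma chi_eq_tsum_average {ω : G → G → ℝ} (hω : ∀ x ∈ R.Δ, Summable fun s => μ s * ω x s) :
    chi R μ ω = ∑' s, μ s * average R ω s := by
  simp only [chi_eq_expect, average, Finset.mul_expect, tsum_expect hω]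

lemma harmonic_of_tsum_eq {ω : G → G → ℝ} {c : ℝ} (hω : ∀ x ∈ R.Δ, SqSummable μ (ω x))
    (h : ∀ x ∈ R.Δ, ∑' s, μ s * ω x s = c) : Harmonic R μ ω := by
  refine ⟨sqInt_iff.mpr hω, fun x hx => ?_⟩
  rw [chi_eq_expect, Finset.expect_congr rfl h, Finset.expect_const R.nonempty, h x hx]

variable (hμ₀ : 0 ≤ μ) (hμ : Summable μ)

include hμ₀

lemma eqOnSupport_zero_of_chi_sq_eq_zero {ω : G → G → ℝ} (hω : SqInt R μ ω)
    (h : chi R μ (fun x s => ω x s ^ 2) = 0) : EqOnSupport R μ ω 0 := by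
  have hnonneg : ∀ x s, 0 ≤ μ s * ω x s ^ 2 := fun x s => mul_nonneg (hμ₀ s) (sq_nonneg _)
  rw [chi_eq_expect,
    Finset.expect_eq_zero_iff_of_nonneg fun x _ => tsum_nonneg (hnonneg x)] at h
  intro x hx s hs
  have hzero := (hasSum_zero_iff_of_nonneg (hnonneg x)).mp (h x hx ▸ (sqInt_iff.mp hω x hx).hasSum)
  simpa [hs] using congrFun hzero s

include hμ

lemma Harmonic.sub {u u' : G → G → ℝ} (hu : Harmonic R μ u) (hu' : Harmonic R μ u') :
    Harmonic R μ fun x s => u x s - u' x s := by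
  have sq := sqInt_iff.mp hu.1
  have sq' := sqInt_iff.mp hu'.1
  refine harmonic_of_tsum_eq (c := chi R μ u - chi R μ u')
    (fun x hx => (sq x hx).sub hμ₀ (sq' x hx)) fun x hx => ?_
  simp only [mul_sub]
  rw [((sq x hx).summable hμ₀ hμ).tsum_sub ((sq' x hx).summable hμ₀ hμ), hu.2 x hx, hu'.2 x hx]

lemma sqSummable_dd (f : G → ℝ) (x : G) : SqSummable μ (dd R f x) :=
  (SqSummable.comp_of_mem hμ₀ hμ (fun s => R.rep_mem (x * s)) f).sub hμ₀ (.const hμ (f x))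

lemma chi_dd (f : G → ℝ) : chi R μ (dd R f) = 0 := by
  simp only [chi_eq_tsum_average fun x _ => (sqSummable_dd hμ₀ hμ f x).summable hμ₀ hμ,
    average_dd, mul_zero, tsum_zero]

-- The energy of `df` is that of `d(f²) - 2 f df`, and `chi` kills the differential `d(f²)`.
lemma chi_dd_sq (f : G → ℝ) :
    chi R μ (fun x s => dd R f x s ^ 2) = -2 * 𝔼 x ∈ R.Δ, f x * ∑' s, μ s * dd R f x s := by
  have sq_eq : ∀ x s, μ s * dd R f x s ^ 2 =
      μ s * dd R (fun y => f y ^ 2) x s - 2 * f x * (μ s * dd R f x s) := fun x s => by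
    simp only [dd]; ring
  have hs : ∀ (h : G → ℝ) x, Summable fun s => μ s * dd R h x s := fun h x =>
    (sqSummable_dd hμ₀ hμ h x).summable hμ₀ hμ
  simp only [chi_eq_expect, sq_eq, (hs _ _).tsum_sub ((hs _ _).mul_left _), tsum_mul_left,
    Finset.expect_sub_distrib]
  rw [← chi_eq_expect, chi_dd hμ₀ hμ, zero_sub, Finset.mul_expect, ← Finset.expect_neg_distrib]
  exact Finset.expect_congr rfl fun x _ => by ring

lemma Harmonic.dd_eqOnSupport_zero {f : G → ℝ} (hf : Harmonic R μ (dd R f)) :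
    EqOnSupport R μ (dd R f) 0 := by
  refine eqOnSupport_zero_of_chi_sq_eq_zero hμ₀ hf.1 ?_
  rw [chi_dd_sq hμ₀ hμ]
  refine mul_eq_zero_of_right _ (Finset.expect_eq_zero fun x hx => ?_)
  rw [hf.2 x hx, chi_dd hμ₀ hμ, mul_zero]

omit hμ₀ hμ

/-- `u` is harmonic and differs from `ω` by a differential. Unlike in `IsHarmDecomp`, antisymmetry
is not part of the definition, because uniqueness does not depend on it. -/
def IsHarmonicPart (R : RepSystem L) (μ : G → ℝ) (ω u : G → G → ℝ) : Prop :=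
  Harmonic R μ u ∧ ∃ f, ∀ x ∈ R.Δ, ∀ s, ω x s = u x s + dd R f x s

lemma IsHarmDecomp.isHarmonicPart {ω u : G → G → ℝ} {f : G → ℝ} (h : IsHarmDecomp R μ ω u f) :
    IsHarmonicPart R μ ω u := ⟨h.2.1, f, h.2.2⟩

namespace IsHarmonicPart

variable {ω u w : G → G → ℝ}

lemma average_eq (h : IsHarmonicPart R μ ω u) (s : G) : average R u s = average R ω s := by
  obtain ⟨-, f, hf⟩ := h
  calc average R u s = average R u s + average R (dd R f) s := by rw [average_dd, add_zero]
    _ = 𝔼 x ∈ R.Δ, (u x s + dd R f x s) := (Finset.expect_add_distrib _ _ _).symm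
    _ = average R ω s := Finset.expect_congr rfl fun x hx => (hf x hx s).symm

include hμ₀ hμ

lemma sqSummable (h : IsHarmonicPart R μ ω u) {x : G} (hx : x ∈ R.Δ) : SqSummable μ (ω x) := by
  obtain ⟨hu, f, hf⟩ := h
  rw [funext (hf x hx)]
  exact (sqInt_iff.mp hu.1 x hx).add hμ₀ (sqSummable_dd hμ₀ hμ f x)

lemma eqOnSupport (hu : IsHarmonicPart R μ ω u) (hw : IsHarmonicPart R μ ω w) :
    EqOnSupport R μ u w := by
  obtain ⟨hu, f, hf⟩ := hu
  obtain ⟨hw, g, hg⟩ := hw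
  have hdiff : ∀ x ∈ R.Δ, ∀ s, dd R (fun y => g y - f y) x s = u x s - w x s := by
    intro x hx s
    have hfg := (hf x hx s).symm.trans (hg x hx s)
    simp only [dd] at hfg ⊢
    linarith
  have hharm : Harmonic R μ (dd R fun y => g y - f y) := by
    refine harmonic_of_tsum_eq (c := chi R μ fun x s => u x s - w x s)
      (fun x _ => sqSummable_dd hμ₀ hμ _ x) fun x hx => ?_
    rw [funext (hdiff x hx)]
    exact (hu.sub hμ₀ hμ hw).2 x hx
  intro x hx s hs
  exact sub_eq_zero.mp ((hdiff x hx s).symm.trans (hharm.dd_eqOnSupport_zero hμ₀ hμ x hx s hs))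

lemma eqOnSupport_of_const {a : G → ℝ} (hu : IsHarmonicPart R μ ω u)
    (ha : ∀ x ∈ R.Δ, ∀ s, ω x s = a s) : EqOnSupport R μ u fun _ => a := by
  have hsq : SqSummable μ a := funext (ha 1 R.one_mem) ▸ hu.sqSummable hμ₀ hμ R.one_mem
  refine hu.eqOnSupport hμ₀ hμ ⟨harmonic_of_tsum_eq (fun _ _ => hsq) fun _ _ => rfl, 0, ?_⟩
  intro x hx s
  simp only [ha x hx s, dd, Pi.zero_apply, sub_self, add_zero]

lemma cov_eq_weightedCov {ω' u' : G → G → ℝ} {a a' : G → ℝ}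
    (hu : IsHarmonicPart R μ ω u) (hu' : IsHarmonicPart R μ ω' u')
    (ha : ∀ x ∈ R.Δ, ∀ s, ω x s = a s) (ha' : ∀ x ∈ R.Δ, ∀ s, ω' x s = a' s) :
    cov R μ u u' = weightedCov μ a a' := by
  rw [cov_congr (hu.eqOnSupport_of_const hμ₀ hμ ha) (hu'.eqOnSupport_of_const hμ₀ hμ ha')]
  simp only [cov_eq, chi_eq_expect, Finset.expect_const R.nonempty, weightedCov]

end IsHarmonicPart

end Diagram

section ProductDiagram

open Function

variable {G₁ G₂ : Type*} [Group G₁] [Group G₂] {L₁ : Subgroup G₁} {L₂ : Subgroup G₂}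
  {R₁ : RepSystem L₁} {R₂ : RepSystem L₂} {ν : G₁ × G₂ → ℝ}

lemma mem_prodRep {x : G₁ × G₂} : x ∈ (prodRep R₁ R₂).Δ ↔ x.1 ∈ R₁.Δ ∧ x.2 ∈ R₂.Δ :=
  Finset.mem_product

lemma chi_prodRep (R₁ : RepSystem L₁) (R₂ : RepSystem L₂) (ν : G₁ × G₂ → ℝ)
    (ω : G₁ × G₂ → G₁ × G₂ → ℝ) :
    chi (prodRep R₁ R₂) ν ω = 𝔼 x ∈ R₁.Δ, 𝔼 y ∈ R₂.Δ, ∑' p, ν p * ω (x, y) p :=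
  (chi_eq_expect _ ν ω).trans (Finset.expect_product' R₁.Δ R₂.Δ fun x y => ∑' p, ν p * ω (x, y) p)

lemma expect_dd_prodRep (f : G₁ × G₂ → ℝ) (x : G₁) (p : G₁ × G₂) :
    𝔼 y ∈ R₂.Δ, dd (prodRep R₁ R₂) f (x, y) p = dd R₁ (fun a => 𝔼 y ∈ R₂.Δ, f (a, y)) x p.1 :=
  (Finset.expect_sub_distrib _ _ _).trans <| congrArg (· - _) <|
    R₂.expect_rep (fun y => f (R₁.rep (x * p.1), y)) p.2

lemma chi_swap (ω : G₁ × G₂ → G₁ × G₂ → ℝ) :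
    chi (prodRep R₂ R₁) (ν ∘ Prod.swap) (ω on Prod.swap) = chi (prodRep R₁ R₂) ν ω := by
  simp only [chi_prodRep]
  rw [Finset.expect_comm]
  exact Finset.expect_congr rfl fun x _ => Finset.expect_congr rfl fun y _ =>
    (Equiv.prodComm G₂ G₁).tsum_eq fun p => ν p * ω (x, y) p

lemma cov_swap (u u' : G₁ × G₂ → G₁ × G₂ → ℝ) :
    cov (prodRep R₂ R₁) (ν ∘ Prod.swap) (u on Prod.swap) (u' on Prod.swap) =
      cov (prodRep R₁ R₂) ν u u' := by
  rw [cov_eq, cov_eq, chi_swap u, chi_swap u', ← chi_swap fun x s => u x s * u' x s]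

lemma IsHarmonicPart.swap {ω u : G₁ × G₂ → G₁ × G₂ → ℝ}
    (h : IsHarmonicPart (prodRep R₁ R₂) ν ω u) :
    IsHarmonicPart (prodRep R₂ R₁) (ν ∘ Prod.swap) (ω on Prod.swap) (u on Prod.swap) := by
  obtain ⟨hu, f, hf⟩ := h
  have mem_swap : ∀ x ∈ (prodRep R₂ R₁).Δ, x.swap ∈ (prodRep R₁ R₂).Δ := fun x hx =>
    mem_prodRep.mpr (mem_prodRep.mp hx).symm
  refine ⟨harmonic_of_tsum_eq (c := chi (prodRep R₁ R₂) ν u) (fun x hx => ?_) fun x hx => ?_,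
    f ∘ Prod.swap, fun x hx s => hf x.swap (mem_swap x hx) s.swap⟩
  · exact (Equiv.prodComm G₂ G₁).summable_iff.mpr (sqInt_iff.mp hu.1 x.swap (mem_swap x hx))
  · rw [← hu.2 x.swap (mem_swap x hx)]
    exact (Equiv.prodComm G₂ G₁).tsum_eq fun p => ν p * u x.swap p

variable (hν₀ : 0 ≤ ν) (hν : Summable ν)

include hν₀ hν

lemma chi_fst (ω : G₁ → G₁ → ℝ) :
    chi (prodRep R₁ R₂) ν (ω on Prod.fst) = chi R₁ (marg1 ν) ω := by
  simp only [chi_prodRep, chi_eq_expect R₁, tsum_mul_fst hν₀ hν, Finset.expect_const R₂.nonempty]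

lemma cov_fst (w w' : G₁ → G₁ → ℝ) :
    cov (prodRep R₁ R₂) ν (w on Prod.fst) (w' on Prod.fst) = cov R₁ (marg1 ν) w w' := by
  rw [cov_eq, cov_eq, chi_fst hν₀ hν w, chi_fst hν₀ hν w',
    ← chi_fst (R₂ := R₂) hν₀ hν fun x s => w x s * w' x s]

lemma Harmonic.fst {u : G₁ → G₁ → ℝ} (hu : Harmonic R₁ (marg1 ν) u) :
    Harmonic (prodRep R₁ R₂) ν (u on Prod.fst) := by
  refine harmonic_of_tsum_eq (c := chi R₁ (marg1 ν) u) (fun x hx => ?_) fun x hx => ?_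
  · exact (SqSummable.comp_fst_iff hν₀ hν).mpr
      (sqInt_iff.mp hu.1 x.1 (mem_prodRep.mp hx).1)
  · simp only [tsum_mul_fst hν₀ hν, hu.2 x.1 (mem_prodRep.mp hx).1]

lemma IsHarmonicPart.fst {ω u : G₁ → G₁ → ℝ} (h : IsHarmonicPart R₁ (marg1 ν) ω u) :
    IsHarmonicPart (prodRep R₁ R₂) ν (ω on Prod.fst) (u on Prod.fst) := by
  obtain ⟨hu, f, hf⟩ := h
  exact ⟨hu.fst hν₀ hν, f ∘ Prod.fst, fun x hx s => hf x.1 (mem_prodRep.mp hx).1 s.1⟩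

-- Averaging the potential over the second factor gives a potential on the first.
lemma IsHarmonicPart.exists_of_fst {ω : G₁ → G₁ → ℝ} {u : G₁ × G₂ → G₁ × G₂ → ℝ}
    (h : IsHarmonicPart (prodRep R₁ R₂) ν (ω on Prod.fst) u) :
    ∃ w, IsHarmonicPart R₁ (marg1 ν) ω w := by
  have hsq : ∀ x ∈ R₁.Δ, SqSummable (marg1 ν) (ω x) := fun x hx =>
    (SqSummable.comp_fst_iff hν₀ hν (h := ω x)).mp
      (h.sqSummable hν₀ hν (x := (x, 1)) (mem_prodRep.mpr ⟨hx, R₂.one_mem⟩))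
  obtain ⟨hu, f, hf⟩ := h
  have hsummable : ∀ x ∈ R₁.Δ, ∀ y ∈ R₂.Δ, Summable fun p => ν p * u (x, y) p := fun x hx y hy =>
    (sqInt_iff.mp hu.1 (x, y) (mem_prodRep.mpr ⟨hx, hy⟩)).summable hν₀ hν
  let g : G₁ → ℝ := fun x => 𝔼 y ∈ R₂.Δ, f (x, y)
  have expect_u : ∀ x ∈ R₁.Δ, ∀ p : G₁ × G₂,
      𝔼 y ∈ R₂.Δ, u (x, y) p = ω x p.1 - dd R₁ g x p.1 := fun x hx p => by
    have hu_eq : ∀ y ∈ R₂.Δ, u (x, y) p = ω x p.1 - dd (prodRep R₁ R₂) f (x, y) p :=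
      fun y hy => eq_sub_of_add_eq (hf (x, y) (mem_prodRep.mpr ⟨hx, hy⟩) p).symm
    rw [Finset.expect_congr rfl hu_eq, Finset.expect_sub_distrib, Finset.expect_const R₂.nonempty,
      expect_dd_prodRep]
  refine ⟨fun x s => ω x s - dd R₁ g x s,
    harmonic_of_tsum_eq (c := chi (prodRep R₁ R₂) ν u) (fun x hx => ?_) fun x hx => ?_,
    g, fun x _ s => (sub_add_cancel _ _).symm⟩
  · exact (hsq x hx).sub (marg1_nonneg hν₀) (sqSummable_dd (marg1_nonneg hν₀) hν.prod g x)
  · calc ∑' a, marg1 ν a * (ω x a - dd R₁ g x a)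
        = ∑' p, 𝔼 y ∈ R₂.Δ, ν p * u (x, y) p := by
          rw [← tsum_mul_fst hν₀ hν fun a => ω x a - dd R₁ g x a]
          simp only [← Finset.mul_expect, expect_u x hx]
      _ = 𝔼 y ∈ R₂.Δ, ∑' p, ν p * u (x, y) p := tsum_expect (hsummable x hx)
      _ = chi (prodRep R₁ R₂) ν u := by
          rw [Finset.expect_congr rfl fun y hy => hu.2 (x, y) (mem_prodRep.mpr ⟨hx, hy⟩),
            Finset.expect_const R₂.nonempty]

lemma IsHarmonicPart.cov_prodRep_fst {ω ω' w w' : G₁ → G₁ → ℝ} {u u' : G₁ × G₂ → G₁ × G₂ → ℝ}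
    (hu : IsHarmonicPart (prodRep R₁ R₂) ν (ω on Prod.fst) u)
    (hu' : IsHarmonicPart (prodRep R₁ R₂) ν (ω' on Prod.fst) u')
    (hw : IsHarmonicPart R₁ (marg1 ν) ω w) (hw' : IsHarmonicPart R₁ (marg1 ν) ω' w') :
    cov (prodRep R₁ R₂) ν u u' = cov R₁ (marg1 ν) w w' := by
  rw [cov_congr (hu.eqOnSupport hν₀ hν (hw.fst hν₀ hν)) (hu'.eqOnSupport hν₀ hν (hw'.fst hν₀ hν)),
    cov_fst hν₀ hν]

lemma IsHarmonicPart.cov_prodRep_snd {ω ω' w w' : G₂ → G₂ → ℝ} {u u' : G₁ × G₂ → G₁ × G₂ → ℝ}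
    (hu : IsHarmonicPart (prodRep R₁ R₂) ν (ω on Prod.snd) u)
    (hu' : IsHarmonicPart (prodRep R₁ R₂) ν (ω' on Prod.snd) u')
    (hw : IsHarmonicPart R₂ (marg2 ν) ω w) (hw' : IsHarmonicPart R₂ (marg2 ν) ω' w') :
    cov (prodRep R₁ R₂) ν u u' = cov R₂ (marg2 ν) w w' :=
  (cov_swap u u').symm.trans <|
    hu.swap.cov_prodRep_fst (fun p => hν₀ p.swap) hν.prod_symm hu'.swap hw hw'

lemma IsHarmonicPart.snd {ω u : G₂ → G₂ → ℝ} (h : IsHarmonicPart R₂ (marg2 ν) ω u) :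
    IsHarmonicPart (prodRep R₁ R₂) ν (ω on Prod.snd) (u on Prod.snd) :=
  (h.fst (ν := ν ∘ Prod.swap) (fun p => hν₀ p.swap) hν.prod_symm).swap

lemma IsHarmonicPart.exists_of_snd {ω : G₂ → G₂ → ℝ} {u : G₁ × G₂ → G₁ × G₂ → ℝ}
    (h : IsHarmonicPart (prodRep R₁ R₂) ν (ω on Prod.snd) u) :
    ∃ w, IsHarmonicPart R₂ (marg2 ν) ω w :=
  h.swap.exists_of_fst (fun p => hν₀ p.swap) hν.prod_symm

omit hν₀ hν in
lemma average_fst_mul_snd (w : G₁ → G₁ → ℝ) (w' : G₂ → G₂ → ℝ) (p : G₁ × G₂) :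
    average (prodRep R₁ R₂) (fun x s => w x.1 s.1 * w' x.2 s.2) p =
      average R₁ w p.1 * average R₂ w' p.2 := by
  rw [average, average, average, Finset.expect_mul_expect]
  exact Finset.expect_product' R₁.Δ R₂.Δ fun x y => w x p.1 * w' y p.2

omit hν₀ hν in
lemma average_fst (w : G₁ → G₁ → ℝ) (p : G₁ × G₂) :
    average (prodRep R₁ R₂) (w on Prod.fst) p = average R₁ w p.1 := by
  have h := average_fst_mul_snd (R₁ := R₁) (R₂ := R₂) w (fun _ _ => 1) p
  simpa only [mul_one, average, Finset.expect_const R₂.nonempty] using h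

omit hν₀ hν in
lemma average_snd (w : G₂ → G₂ → ℝ) (p : G₁ × G₂) :
    average (prodRep R₁ R₂) (w on Prod.snd) p = average R₂ w p.2 := by
  have h := average_fst_mul_snd (R₁ := R₁) (R₂ := R₂) (fun _ _ => 1) w p
  simpa only [one_mul, average, Finset.expect_const R₁.nonempty] using h

lemma cov_fst_snd {w : G₁ → G₁ → ℝ} {w' : G₂ → G₂ → ℝ}
    (hw : SqInt (prodRep R₁ R₂) ν (w on Prod.fst))
    (hw' : SqInt (prodRep R₁ R₂) ν (w' on Prod.snd)) :
    cov (prodRep R₁ R₂) ν (w on Prod.fst) (w' on Prod.snd) =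
      weightedCov ν (average R₁ w ∘ Prod.fst) (average R₂ w' ∘ Prod.snd) := by
  have sq := sqInt_iff.mp hw
  have sq' := sqInt_iff.mp hw'
  rw [cov_eq, chi_eq_tsum_average fun x hx => (sq x hx).summable hν₀ hν,
    chi_eq_tsum_average fun x hx => (sq' x hx).summable hν₀ hν,
    chi_eq_tsum_average fun x hx => (sq x hx).summable_mul hν₀ (sq' x hx)]
  simp only [average_fst, average_snd]
  simp only [onFun, average_fst_mul_snd]
  rfl

lemma IsHarmonicPart.cov_prodRep_fst_snd {ω : G₁ → G₁ → ℝ} {ω' : G₂ → G₂ → ℝ}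
    {u u' : G₁ × G₂ → G₁ × G₂ → ℝ}
    (hu : IsHarmonicPart (prodRep R₁ R₂) ν (ω on Prod.fst) u)
    (hu' : IsHarmonicPart (prodRep R₁ R₂) ν (ω' on Prod.snd) u') :
    cov (prodRep R₁ R₂) ν u u' =
      weightedCov ν (average R₁ ω ∘ Prod.fst) (average R₂ ω' ∘ Prod.snd) := by
  obtain ⟨w, hw⟩ := hu.exists_of_fst hν₀ hν
  obtain ⟨w', hw'⟩ := hu'.exists_of_snd hν₀ hν
  have hW := hw.fst (R₂ := R₂) hν₀ hν
  have hW' := hw'.snd (R₁ := R₁) hν₀ hν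
  rw [cov_congr (hu.eqOnSupport hν₀ hν hW) (hu'.eqOnSupport hν₀ hν hW'),
    cov_fst_snd hν₀ hν hW.1.1 hW'.1.1, funext hw.average_eq, funext hw'.average_eq]

end ProductDiagram

section Noised

variable {G : Type*} {μ : G → ℝ} {ρ : ℝ}

lemma noised_comp_swap (μ : G → ℝ) (ρ : ℝ) : noised μ ρ ∘ Prod.swap = noised μ ρ := by
  funext ⟨a, b⟩
  by_cases h : a = b
  · rw [h]; rfl
  · simp only [noised, Function.comp_apply, Prod.swap_prod_mk, h, Ne.symm h, if_false]
    ring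

lemma noised_nonneg (hμ₀ : 0 ≤ μ) (hρ₀ : 0 ≤ ρ) (hρ₁ : ρ ≤ 1) : 0 ≤ noised μ ρ := fun p =>
  add_nonneg (mul_nonneg (mul_nonneg hρ₀ (hμ₀ p.1)) (hμ₀ p.2))
    (mul_nonneg (mul_nonneg (sub_nonneg.mpr hρ₁) (hμ₀ p.1)) (by split_ifs <;> norm_num))

lemma hasSum_diagonal {h k : G → ℝ} (hhk : Summable fun s => μ s * (h s * k s)) :
    HasSum (fun p : G × G => μ p.1 * (if p.1 = p.2 then 1 else 0) * (h p.1 * k p.2))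
      (∑' s, μ s * (h s * k s)) := by
  have diag_injective : Function.Injective fun s : G => (s, s) := fun _ _ => congrArg Prod.fst
  refine (diag_injective.hasSum_iff fun p hp => ?_).mp (hhk.hasSum.congr_fun fun s => ?_)
  · have off_diag : p.1 ≠ p.2 := fun h => hp ⟨p.1, Prod.ext rfl h⟩
    rw [if_neg off_diag, mul_zero, zero_mul]
  · simp only [Function.comp_apply, if_true, mul_one]

lemma hasSum_noised_mul {h k : G → ℝ} (hh : Summable fun s => μ s * h s)
    (hk : Summable fun s => μ s * k s) (hhk : Summable fun s => μ s * (h s * k s)) :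
    HasSum (fun p => noised μ ρ p * (h p.1 * k p.2))
      (ρ * ((∑' s, μ s * h s) * ∑' s, μ s * k s) + (1 - ρ) * ∑' s, μ s * (h s * k s)) := by
  have indep := hh.hasSum.mul hk.hasSum (summable_mul_of_summable_norm hh.norm hk.norm)
  refine ((indep.mul_left ρ).add ((hasSum_diagonal hhk).mul_left (1 - ρ))).congr_fun fun p => ?_
  simp only [noised]
  ring

lemma hasSum_noised (hμ : HasSum μ 1) : HasSum (noised μ ρ) 1 := by
  have h1 : Summable fun s => μ s * 1 := by simpa only [mul_one] using hμ.summable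
  simpa [hμ.tsum_eq] using hasSum_noised_mul (ρ := ρ) h1 h1 (by simpa only [mul_one] using h1)

lemma marg1_noised (hμ : HasSum μ 1) : marg1 (noised μ ρ) = μ := by
  funext a
  have hsum := (hμ.mul_left (ρ * μ a)).add
    ((hasSum_ite_eq a (1 : ℝ)).mul_left ((1 - ρ) * μ a))
  simp only [marg1, noised, eq_comm (a := a), hsum.tsum_eq]
  ring

lemma marg2_noised (hμ : HasSum μ 1) : marg2 (noised μ ρ) = μ :=
  (congrArg marg1 (noised_comp_swap μ ρ)).trans (marg1_noised hμ)

lemma weightedCov_noised (hμ₀ : 0 ≤ μ) (hμ : HasSum μ 1) {a b : G → ℝ} (ha : SqSummable μ a)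
    (hb : SqSummable μ b) :
    weightedCov (noised μ ρ) (a ∘ Prod.fst) (b ∘ Prod.snd) = (1 - ρ) * weightedCov μ a b := by
  have h1 : SqSummable μ fun _ => 1 := .const hμ.summable 1
  have tsum_mul : ∀ {h k : G → ℝ}, SqSummable μ h → SqSummable μ k →
      ∑' p : G × G, noised μ ρ p * (h p.1 * k p.2) =
        ρ * ((∑' s, μ s * h s) * ∑' s, μ s * k s) + (1 - ρ) * ∑' s, μ s * (h s * k s) :=
    fun hh hk => (hasSum_noised_mul (hh.summable hμ₀ hμ.summable) (hk.summable hμ₀ hμ.summable)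
      (hh.summable_mul hμ₀ hk)).tsum_eq
  have tsum_fst := tsum_mul ha h1
  have tsum_snd := tsum_mul h1 hb
  simp only [mul_one, one_mul, hμ.tsum_eq] at tsum_fst tsum_snd
  simp only [weightedCov, Function.comp_apply, tsum_mul ha hb, tsum_fst, tsum_snd]
  ring

end Noised

section Semidirect

variable {G : Type*} [Group G] {L : Subgroup G} {m : ℕ}

lemma RepSystem.rep_mul_of_subgroup [L.Normal] (R : RepSystem L)
    (hΔ : ∃ H : Subgroup G, (H : Set G) = (R.Δ : Set G)) {x : G} (hx : x ∈ R.Δ) (s : G) :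
    R.rep (x * s) = x * R.rep s := by
  obtain ⟨H, hH⟩ := hΔ
  have mem_iff : ∀ y, y ∈ H ↔ y ∈ R.Δ := Set.ext_iff.mp hH
  have hmem : x * R.rep s ∈ R.Δ :=
    (mem_iff _).mp (H.mul_mem ((mem_iff _).mpr hx) ((mem_iff _).mpr (R.rep_mem s)))
  calc R.rep (x * s) = R.rep (x * (s * (R.rep s)⁻¹) * x⁻¹ * (x * R.rep s)) := by
        congr 1
        group
    _ = x * R.rep s := by
        rw [R.rep_coset _ _ (Subgroup.Normal.conj_mem ‹_› _ (R.rep_spec s) x), R.rep_idem _ hmem]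

/-- The image in `ℝ^m` of the lattice vector `ψ(lam)`. -/
def latticeVec (ψ : L ≃* Multiplicative (Fin m → ℤ)) (lam : L) : Fin m → ℝ :=
  fun i => (Multiplicative.toAdd (ψ lam) i : ℝ)

lemma linearMap_ext_latticeVec (ψ : L ≃* Multiplicative (Fin m → ℤ)) {V : Type*}
    [AddCommMonoid V] [Module ℝ V] {A A' : (Fin m → ℝ) →ₗ[ℝ] V}
    (h : ∀ lam, A (latticeVec ψ lam) = A' (latticeVec ψ lam)) : A = A' := by
  refine (Pi.basisFun ℝ (Fin m)).ext fun i => ?_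
  have basis_eq :
      latticeVec ψ (ψ.symm (Multiplicative.ofAdd (Pi.single i 1))) = Pi.basisFun ℝ (Fin m) i := by
    funext j
    simp [latticeVec, Pi.single_apply, apply_ite]
  exact basis_eq ▸ h _

/-- `Ad` is the linear extension to `ℝ^m` of the conjugation action of `G ⧸ L` on the lattice `L`;
by `linearMap_ext_latticeVec` there is at most one such `Ad`. -/
def IsAd [hN : L.Normal] (ψ : L ≃* Multiplicative (Fin m → ℤ))
    (Ad : G ⧸ L → (Fin m → ℝ) →ₗ[ℝ] (Fin m → ℝ)) : Prop :=
  ∀ (x : G) (lam : L), Ad x (latticeVec ψ lam) =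
    latticeVec ψ ⟨x * (lam : G) * x⁻¹, hN.conj_mem (lam : G) lam.2 x⟩

namespace IsAd

variable [L.Normal] {ψ : L ≃* Multiplicative (Fin m → ℤ)}
  {Ad : G ⧸ L → (Fin m → ℝ) →ₗ[ℝ] (Fin m → ℝ)}

lemma map_one (hAd : IsAd ψ Ad) : Ad 1 = 1 := by
  refine linearMap_ext_latticeVec ψ fun lam => ?_
  rw [← QuotientGroup.mk_one, hAd]
  simp

lemma map_mul (hAd : IsAd ψ Ad) (p q : G ⧸ L) : Ad (p * q) = Ad p * Ad q := by
  induction p using QuotientGroup.induction_on with | H x => ?_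
  induction q using QuotientGroup.induction_on with | H y => ?_
  refine linearMap_ext_latticeVec ψ fun lam => ?_
  rw [← QuotientGroup.mk_mul, Module.End.mul_apply, hAd, hAd, hAd]
  simp only [_root_.mul_inv_rev, mul_assoc]

/-- The map `Ad` as a representation of `G ⧸ L` on `ℝ^m`. -/
def representation (hAd : IsAd ψ Ad) : Representation ℝ (G ⧸ L) (Fin m → ℝ) where
  toFun := Ad
  map_one' := hAd.map_one
  map_mul' := hAd.map_mul

lemma cocycle_eq (hAd : IsAd ψ Ad) {R : RepSystem L}
    (hΔ : ∃ H : Subgroup G, (H : Set G) = (R.Δ : Set G)) {x : G} (hx : x ∈ R.Δ) (s : G) :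
    (fun i => (cocycle ψ R x s i : ℝ)) = Ad x fun i => (cocycle ψ R 1 s i : ℝ) := by
  have conj_eq : x * s * (R.rep (x * s))⁻¹ = x * (1 * s * (R.rep (1 * s))⁻¹) * x⁻¹ := by
    rw [R.rep_mul_of_subgroup hΔ hx, one_mul]
    group
  simp only [cocycle, conj_eq]
  exact (hAd x ⟨1 * s * (R.rep (1 * s))⁻¹, R.rep_spec (1 * s)⟩).symm

variable {B : (Fin m → ℝ) →ₗ[ℝ] (Fin m → ℝ) →ₗ[ℝ] ℝ} {T : (Fin m → ℝ) → (Fin m → ℝ)}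

lemma bilin_apply_right (hAd : IsAd ψ Ad) (hBinv : ∀ q u w, B (Ad q u) (Ad q w) = B u w)
    (q : G ⧸ L) (v a : Fin m → ℝ) : B v (Ad q a) = B (Ad q⁻¹ v) a := by
  rw [← hBinv q (Ad q⁻¹ v) a]
  exact congrArg (B · (Ad q a)) (hAd.representation.self_inv_apply q v).symm

lemma vhatB_eq_vhatB_one (hAd : IsAd ψ Ad) (hBinv : ∀ q u w, B (Ad q u) (Ad q w) = B u w)
    {R : RepSystem L} (hΔ : ∃ H : Subgroup G, (H : Set G) = (R.Δ : Set G)) (v : Fin m → ℝ)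
    {x : G} (hx : x ∈ R.Δ) (s : G) :
    vhatB ψ R B v x s = vhatB ψ R B (Ad (x : G ⧸ L)⁻¹ v) 1 s := by
  rw [vhatB, hAd.cocycle_eq hΔ hx, hAd.bilin_apply_right hBinv, vhatB]

lemma apply_mean [Finite (G ⧸ L)] (hAd : IsAd ψ Ad)
    (hT : ∀ v, T v = (L.index : ℝ)⁻¹ • ∑' q : G ⧸ L, Ad q v) (q : G ⧸ L) (v : Fin m → ℝ) :
    Ad q (T v) = T v := by
  have := Fintype.ofFinite (G ⧸ L)
  have mean_eq : T v = (L.index : ℝ)⁻¹ • hAd.representation.norm v := by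
    rw [hT, tsum_fintype, Representation.norm, LinearMap.sum_apply]
    rfl
  rw [mean_eq, map_smul]
  exact congrArg _ (hAd.representation.self_norm_apply q v)

lemma vhatB_mean (hAd : IsAd ψ Ad) (hBinv : ∀ q u w, B (Ad q u) (Ad q w) = B u w)
    (hT : ∀ v, T v = (L.index : ℝ)⁻¹ • ∑' q : G ⧸ L, Ad q v)
    {R : RepSystem L} (hΔ : ∃ H : Subgroup G, (H : Set G) = (R.Δ : Set G)) (v : Fin m → ℝ)
    {x : G} (hx : x ∈ R.Δ) (s : G) : vhatB ψ R B (T v) x s = vhatB ψ R B (T v) 1 s := by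
  have := Subgroup.fintypeOfIndexNeZero R.index_ne_zero
  rw [hAd.vhatB_eq_vhatB_one hBinv hΔ _ hx, hAd.apply_mean hT]

lemma average_vhatB (hAd : IsAd ψ Ad) (hBinv : ∀ q u w, B (Ad q u) (Ad q w) = B u w)
    (hT : ∀ v, T v = (L.index : ℝ)⁻¹ • ∑' q : G ⧸ L, Ad q v)
    {R : RepSystem L} (hΔ : ∃ H : Subgroup G, (H : Set G) = (R.Δ : Set G)) (v : Fin m → ℝ) :
    average R (vhatB ψ R B v) = vhatB ψ R B (T v) 1 := by
  have := Subgroup.fintypeOfIndexNeZero R.index_ne_zero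
  funext s
  set a : Fin m → ℝ := fun i => (cocycle ψ R 1 s i : ℝ)
  calc average R (vhatB ψ R B v) s
      = 𝔼 x ∈ R.Δ, B (Ad ((x⁻¹ : G) : G ⧸ L) v) a :=
        Finset.expect_congr rfl fun x hx => hAd.vhatB_eq_vhatB_one hBinv hΔ v hx s
    _ = (L.index : ℝ)⁻¹ * ∑ q, B (Ad q v) a := R.expect_eq_sum_quotient fun q => B (Ad q v) a
    _ = B (T v) a := by
        rw [hT, tsum_fintype, map_smul, map_sum, LinearMap.smul_apply, LinearMap.sum_apply,
          smul_eq_mul]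

end IsAd

lemma vhatB2_fst {G₁ G₂ : Type*} [Group G₁] [Group G₂] {L₁ : Subgroup G₁} {L₂ : Subgroup G₂}
    {m₁ m₂ : ℕ} (ψ₁ : L₁ ≃* Multiplicative (Fin m₁ → ℤ)) (R₁ : RepSystem L₁)
    (B₁ : (Fin m₁ → ℝ) →ₗ[ℝ] (Fin m₁ → ℝ) →ₗ[ℝ] ℝ)
    (ψ₂ : L₂ ≃* Multiplicative (Fin m₂ → ℤ)) (R₂ : RepSystem L₂)
    (B₂ : (Fin m₂ → ℝ) →ₗ[ℝ] (Fin m₂ → ℝ) →ₗ[ℝ] ℝ) (v : Fin m₁ → ℝ) :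
    vhatB2 ψ₁ R₁ B₁ ψ₂ R₂ B₂ (v, 0) = Function.onFun (vhatB ψ₁ R₁ B₁ v) Prod.fst := by
  funext x s
  simp only [vhatB2, vhatB, Function.onFun, _root_.map_zero, LinearMap.zero_apply, add_zero]

lemma vhatB2_snd {G₁ G₂ : Type*} [Group G₁] [Group G₂] {L₁ : Subgroup G₁} {L₂ : Subgroup G₂}
    {m₁ m₂ : ℕ} (ψ₁ : L₁ ≃* Multiplicative (Fin m₁ → ℤ)) (R₁ : RepSystem L₁)
    (B₁ : (Fin m₁ → ℝ) →ₗ[ℝ] (Fin m₁ → ℝ) →ₗ[ℝ] ℝ)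
    (ψ₂ : L₂ ≃* Multiplicative (Fin m₂ → ℤ)) (R₂ : RepSystem L₂)
    (B₂ : (Fin m₂ → ℝ) →ₗ[ℝ] (Fin m₂ → ℝ) →ₗ[ℝ] ℝ) (v : Fin m₂ → ℝ) :
    vhatB2 ψ₁ R₁ B₁ ψ₂ R₂ B₂ (0, v) = Function.onFun (vhatB ψ₂ R₂ B₂ v) Prod.snd := by
  funext x s
  simp only [vhatB2, vhatB, Function.onFun, _root_.map_zero, LinearMap.zero_apply, zero_add]

end Semidirect

theorem covariance_structure_noised_semidirect_general
    {G : Type*} [Group G] {L : Subgroup G} [L.Normal] {m : ℕ}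
    {ψ : L ≃* Multiplicative (Fin m → ℤ)} {R : RepSystem L}
    (hΔ : ∃ H : Subgroup G, (H : Set G) = (R.Δ : Set G))
    {Ad : G ⧸ L → (Fin m → ℝ) →ₗ[ℝ] (Fin m → ℝ)} (hAd : IsAd ψ Ad)
    {B : (Fin m → ℝ) →ₗ[ℝ] (Fin m → ℝ) →ₗ[ℝ] ℝ} (hBinv : ∀ q u w, B (Ad q u) (Ad q w) = B u w)
    {T : (Fin m → ℝ) → (Fin m → ℝ)} (hT : ∀ v, T v = (L.index : ℝ)⁻¹ • ∑' q : G ⧸ L, Ad q v)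
    {μ : G → ℝ} (hμ : IsProb μ) {ρ : ℝ} (hρ₀ : 0 ≤ ρ) (hρ₁ : ρ ≤ 1) :
    (∀ (v v' : Fin m → ℝ) (u u' : G × G → G × G → ℝ) (f f' : G × G → ℝ)
        (w w' : G → G → ℝ) (g g' : G → ℝ),
        IsHarmDecomp (prodRep R R) (noised μ ρ) (vhatB2 ψ R B ψ R B (v, 0)) u f →
        IsHarmDecomp (prodRep R R) (noised μ ρ) (vhatB2 ψ R B ψ R B (v', 0)) u' f' →
        IsHarmDecomp R μ (vhatB ψ R B v) w g → IsHarmDecomp R μ (vhatB ψ R B v') w' g' →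
        cov (prodRep R R) (noised μ ρ) u u' = cov R μ w w') ∧
    (∀ (v v' : Fin m → ℝ) (u u' : G × G → G × G → ℝ) (f f' : G × G → ℝ)
        (w w' : G → G → ℝ) (g g' : G → ℝ),
        IsHarmDecomp (prodRep R R) (noised μ ρ) (vhatB2 ψ R B ψ R B (0, v)) u f →
        IsHarmDecomp (prodRep R R) (noised μ ρ) (vhatB2 ψ R B ψ R B (0, v')) u' f' →
        IsHarmDecomp R μ (vhatB ψ R B v) w g → IsHarmDecomp R μ (vhatB ψ R B v') w' g' →
        cov (prodRep R R) (noised μ ρ) u u' = cov R μ w w') ∧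
    (∀ (v₁ v₂ : Fin m → ℝ) (u u' : G × G → G × G → ℝ) (f f' : G × G → ℝ)
        (w w' : G → G → ℝ) (g g' : G → ℝ),
        IsHarmDecomp (prodRep R R) (noised μ ρ) (vhatB2 ψ R B ψ R B (v₁, 0)) u f →
        IsHarmDecomp (prodRep R R) (noised μ ρ) (vhatB2 ψ R B ψ R B (0, v₂)) u' f' →
        IsHarmDecomp R μ (vhatB ψ R B (T v₁)) w g → IsHarmDecomp R μ (vhatB ψ R B (T v₂)) w' g' →
        cov (prodRep R R) (noised μ ρ) u u' = (1 - ρ) * cov R μ w w') := by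
  have hν₀ : 0 ≤ noised μ ρ := noised_nonneg hμ.1 hρ₀ hρ₁
  have hν : Summable (noised μ ρ) := (hasSum_noised hμ.2).summable
  simp only [vhatB2_fst, vhatB2_snd]
  refine ⟨fun v v' u u' f f' w w' g g' hu hu' hw hw' => ?_,
    fun v v' u u' f f' w w' g g' hu hu' hw hw' => ?_,
    fun v₁ v₂ u u' f f' w w' g g' hu hu' hw hw' => ?_⟩
  · simpa only [marg1_noised hμ.2, hw.isHarmonicPart, hw'.isHarmonicPart, forall_const] using
      hu.isHarmonicPart.cov_prodRep_fst hν₀ hν hu'.isHarmonicPart (w := w) (w' := w')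
  · simpa only [marg2_noised hμ.2, hw.isHarmonicPart, hw'.isHarmonicPart, forall_const] using
      hu.isHarmonicPart.cov_prodRep_snd hν₀ hν hu'.isHarmonicPart (w := w) (w' := w')
  · have hμs := hμ.2.summable
    have T_const : ∀ v, ∀ x ∈ R.Δ, ∀ s, vhatB ψ R B (T v) x s = vhatB ψ R B (T v) 1 s :=
      fun v _ hx => hAd.vhatB_mean hBinv hT hΔ v hx
    have sq : ∀ {v w g}, IsHarmDecomp R μ (vhatB ψ R B (T v)) w g →
        SqSummable μ (vhatB ψ R B (T v) 1) :=
      fun h => h.isHarmonicPart.sqSummable hμ.1 hμs R.one_mem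
    calc cov (prodRep R R) (noised μ ρ) u u'
        = weightedCov (noised μ ρ) (vhatB ψ R B (T v₁) 1 ∘ Prod.fst)
            (vhatB ψ R B (T v₂) 1 ∘ Prod.snd) := by
          rw [hu.isHarmonicPart.cov_prodRep_fst_snd hν₀ hν hu'.isHarmonicPart,
            hAd.average_vhatB hBinv hT hΔ, hAd.average_vhatB hBinv hT hΔ]
      _ = (1 - ρ) * weightedCov μ (vhatB ψ R B (T v₁) 1) (vhatB ψ R B (T v₂) 1) :=
          weightedCov_noised hμ.1 hμ.2 (sq hw) (sq hw')
      _ = (1 - ρ) * cov R μ w w' := by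
          rw [hw.isHarmonicPart.cov_eq_weightedCov hμ.1 hμs hw'.isHarmonicPart (T_const v₁)
            (T_const v₂)]

/-- Covariance structure for the noised walk `π^ρ` on a semidirect
product `Γ = Λ ⋊ Δ`: the diagonal blocks equal the covariance of `μ` and the
off-diagonal block equals `(1−ρ)·B_μ(θ̲v₁, θ̲v₂)`. -/
theorem covariance_structure_noised_semidirect
    {Γ : Type*} [Group Γ] [Countable Γ] {Λ : Subgroup Γ} (hN : Λ.Normal)
    (hI : Λ.index ≠ 0) {m : ℕ} (hm : 1 ≤ m) (ψ : Λ ≃* Multiplicative (Fin m → ℤ))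
    (R : RepSystem Λ)
    (hΔ : ∃ H : Subgroup Γ, (H : Set Γ) = (R.Δ : Set Γ))
    (Ad : Γ ⧸ Λ → (Fin m → ℝ) →ₗ[ℝ] (Fin m → ℝ))
    (hAd : ∀ (x : Γ) (lam : Λ),
        Ad (QuotientGroup.mk x) (fun i => (Multiplicative.toAdd (ψ lam) i : ℝ)) =
          fun i => (Multiplicative.toAdd
            (ψ ⟨x * (lam : Γ) * x⁻¹, hN.conj_mem (lam : Γ) lam.2 x⟩) i : ℝ))
    (B : (Fin m → ℝ) →ₗ[ℝ] (Fin m → ℝ) →ₗ[ℝ] ℝ)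
    (hBsymm : ∀ u w, B u w = B w u) (hBpos : ∀ u, u ≠ 0 → 0 < B u u)
    (hBinv : ∀ (f : Γ ⧸ Λ) (u w), B (Ad f u) (Ad f w) = B u w)
    (T : (Fin m → ℝ) →ₗ[ℝ] (Fin m → ℝ))
    (hT : ∀ v, T v = (Λ.index : ℝ)⁻¹ • ∑' f : Γ ⧸ Λ, Ad f v)
    (μ : Γ → ℝ) (hμ : IsProb μ) (hnd : Nondeg μ) (hap : Aperiodic μ)
    (hmom : FinSecondMoment μ)
    (ρ : ℝ) (hρ0 : 0 < ρ) (hρ1 : ρ ≤ 1) :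
    -- first diagonal block
    (∀ (v₁ v₁' : Fin m → ℝ) (u u' : (Γ × Γ) → (Γ × Γ) → ℝ) (f f' : Γ × Γ → ℝ)
        (u₁ u₁' : Γ → Γ → ℝ) (g g' : Γ → ℝ),
        IsHarmDecomp (prodRep R R) (noised μ ρ) (vhatB2 ψ R B ψ R B (v₁, 0)) u f →
        IsHarmDecomp (prodRep R R) (noised μ ρ) (vhatB2 ψ R B ψ R B (v₁', 0)) u' f' →
        IsHarmDecomp R μ (vhatB ψ R B v₁) u₁ g →
        IsHarmDecomp R μ (vhatB ψ R B v₁') u₁' g' →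
        cov (prodRep R R) (noised μ ρ) u u' = cov R μ u₁ u₁') ∧
    -- second diagonal block
    (∀ (v₁ v₁' : Fin m → ℝ) (u u' : (Γ × Γ) → (Γ × Γ) → ℝ) (f f' : Γ × Γ → ℝ)
        (u₁ u₁' : Γ → Γ → ℝ) (g g' : Γ → ℝ),
        IsHarmDecomp (prodRep R R) (noised μ ρ) (vhatB2 ψ R B ψ R B (0, v₁)) u f →
        IsHarmDecomp (prodRep R R) (noised μ ρ) (vhatB2 ψ R B ψ R B (0, v₁')) u' f' →
        IsHarmDecomp R μ (vhatB ψ R B v₁) u₁ g →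
        IsHarmDecomp R μ (vhatB ψ R B v₁') u₁' g' →
        cov (prodRep R R) (noised μ ρ) u u' = cov R μ u₁ u₁') ∧
    -- off-diagonal block
    (∀ (v₁ v₂ : Fin m → ℝ) (u u' : (Γ × Γ) → (Γ × Γ) → ℝ) (f f' : Γ × Γ → ℝ)
        (u₁ u₂ : Γ → Γ → ℝ) (g g' : Γ → ℝ),
        IsHarmDecomp (prodRep R R) (noised μ ρ) (vhatB2 ψ R B ψ R B (v₁, 0)) u f →
        IsHarmDecomp (prodRep R R) (noised μ ρ) (vhatB2 ψ R B ψ R B (0, v₂)) u' f' →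
        IsHarmDecomp R μ (vhatB ψ R B (T v₁)) u₁ g →
        IsHarmDecomp R μ (vhatB ψ R B (T v₂)) u₂ g' →
        cov (prodRep R R) (noised μ ρ) u u' = (1 - ρ) * cov R μ u₁ u₂) :=
  covariance_structure_noised_semidirect_general hΔ hAd hBinv hT hμ hρ0.le hρ1

end NSVA
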